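/- Let D ⊂ ℝ^d be a measurable set with Lebesgue measure |D| satisfying 0 < |D| < ∞, and let T > 0. Let k > 0, δ ≥ 0, η ≥ 0, γ ∈ ℝ, λ₁ > 0 be constants; let n > 1, let m satisfy m = 0 or m ≥ 1, and assume m + n > q > p > 1. Let φ : D → [0,∞) be measurable with ∫_D φ(y) dy = 1 and with φ^{q/(q−p)}, φ^{n/(n−1)}, and φ^{p+1} integrable on D. Let β : [0,T] → ℝ be continuous with β*(T) = sup_{0≤s≤T}|β(s)|, and let b > 1 satisfy b^{q−p}·e^{−η(q−1)β*(T)} ≥ 2k·(∫_D φ^{q/(q−p)})^{(q−p)/p} / (∫_D φ^{p+1})^{(q−p)/p}. Let v : [0,T] × D → [0,∞) satisfy v(t,x) ≥ b·φ(x) for all (t,x), with v(t,·)^q, v(t,·)^n, v(t,·)^p·φ, v(t,·)^m·φ, v(t,·)·φ integrable on D for each t, and suppose J(t) := ∫_D v(t,x)·φ(x) dx is differentiable on [0,T] with J(t) ≥ J(0) for all t and J'(t) = (−λ₁+γ)·J(t) + e^{(q−1)ηβ(t)}·∫_D v(t,y)^q dy − k·e^{(p−1)ηβ(t)}·∫_D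 v(t,x)^p·φ(x) dx + δ·e^{(m+n−1)ηβ(t)}·(∫_D v(t,z)^m·φ(z) dz)·(∫_D v(t,y)^n dy) for all t ∈ [0,T]. Set A₀ = ((m+n−q)/(m+n))·((m+n)/q)^{q/(m+n−q)}, let ε₀ > 0 satisfy ε₀ ≤ (J(0)^q/A₀)^{(m+n−q)/q}, and set C = (1/2)·(∫_D φ^{q/(q−p)})^{(p−q)/p} + δ·( ε₀ − A₀·ε₀^{(m+n)/(m+n−q)}/J(0)^q )·(∫_D φ^{n/(n−1)})^{1−n}. Then for all t ∈ [0,T]: (q−1)·C·∫₀^t min( e^{(q−1)ηβ(s)}, e^{(m+n−1)ηβ(s)} )·e^{(−λ₁+γ)(q−1)s} ds < J(0)^{1−q}. -/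

import Mathlib

open MeasureTheory Real Set

/-!
Write `J = ∫ v φ`. Hölder's inequality, and Jensen's for the probability density `φ`, bound each
integral in the equation for `J'` by a power of `J`. The gain `∫ v ^ q` controls
`(∫ v ^ p φ) ^ (q / p)`; since `v ≥ b φ` with `b` large, half of it absorbs the loss
`k ∫ v ^ p φ` and the other half is at least a multiple of `J ^ q`. The nonlocal gain dominates
`J ^ (m + n)`, which Young's inequality and `J ≥ J 0` turn into a multiple of `J ^ q`. Hence
`J' ≥ a J + C M J ^ q`, where `M` is the smaller of the two exponential weights, and the Bernoulli
substitution `J ^ (1 - q) exp (a (q - 1) t)`, which is positive, integrates this inequality.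
-/

section Integral

variable {α : Type*} [MeasurableSpace α] {μ : Measure α} {f g w : α → ℝ} {r : ℝ}

theorem memLp_of_integrable_rpow (hr : 0 < r) (hf : 0 ≤ᵐ[μ] f)
    (hfr : Integrable (fun x => f x ^ r) μ) : MemLp f (ENNReal.ofReal r) μ := by
  have hf_root : (fun x => (f x ^ r) ^ r⁻¹) =ᵐ[μ] f := by
    filter_upwards [hf] with x hx using rpow_rpow_inv hx hr.ne'
  have hfm : AEStronglyMeasurable f μ :=
    (hfr.aemeasurable.pow_const r⁻¹).aestronglyMeasurable.congr hf_root
  rw [← integrable_norm_rpow_iff hfm (by simpa using hr) ENNReal.ofReal_ne_top,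
    ENNReal.toReal_ofReal hr.le]
  refine hfr.congr ?_
  filter_upwards [hf] with x hx
  rw [norm_of_nonneg hx]

theorem integral_pos_of_ae_eq_zero_imp (hg : 0 ≤ᵐ[μ] g) (hgi : Integrable g μ)
    (hf : ¬ f =ᵐ[μ] 0) (hgf : ∀ᵐ x ∂μ, g x = 0 → f x = 0) : 0 < ∫ x, g x ∂μ := by
  refine (integral_nonneg_of_ae hg).lt_of_ne' fun h => hf ?_
  filter_upwards [(integral_eq_zero_iff_of_nonneg_ae hg hgi).1 h, hgf] with x hx hx' using hx' hx

theorem integral_rpow_pos (hr : r ≠ 0) (hf : 0 ≤ᵐ[μ] f) (hf0 : ¬ f =ᵐ[μ] 0)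
    (hfr : Integrable (fun x => f x ^ r) μ) : 0 < ∫ x, f x ^ r ∂μ := by
  refine integral_pos_of_ae_eq_zero_imp ?_ hfr hf0 ?_
  · filter_upwards [hf] with x hx using rpow_nonneg hx r
  · filter_upwards [hf] with x hx using (rpow_eq_zero hx hr).1

theorem integral_mul_rpow_le_integral_rpow_mul (hr : 1 < r) (hf : 0 ≤ᵐ[μ] f) (hg : 0 ≤ᵐ[μ] g)
    (hfr : Integrable (fun x => f x ^ r) μ) (hgr : Integrable (fun x => g x ^ (r / (r - 1))) μ) :
    (∫ x, f x * g x ∂μ) ^ r ≤ (∫ x, f x ^ r ∂μ) * (∫ x, g x ^ (r / (r - 1)) ∂μ) ^ (r - 1) := by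
  have hr0 : 0 < r := by linarith
  have hr1 : 0 < r - 1 := by linarith
  have hF : 0 ≤ ∫ x, f x ^ r ∂μ := integral_nonneg_of_ae <| by
    filter_upwards [hf] with x hx using rpow_nonneg hx _
  have hG : 0 ≤ ∫ x, g x ^ (r / (r - 1)) ∂μ := integral_nonneg_of_ae <| by
    filter_upwards [hg] with x hx using rpow_nonneg hx _
  have hFG : 0 ≤ ∫ x, f x * g x ∂μ := integral_nonneg_of_ae <| by
    filter_upwards [hf, hg] with x hx hy using mul_nonneg hx hy
  calc (∫ x, f x * g x ∂μ) ^ r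
      ≤ ((∫ x, f x ^ r ∂μ) ^ (1 / r)
          * (∫ x, g x ^ (r / (r - 1)) ∂μ) ^ (1 / (r / (r - 1)))) ^ r :=
        rpow_le_rpow hFG (integral_mul_le_Lp_mul_Lq_of_nonneg (.conjExponent hr) hf hg
          (memLp_of_integrable_rpow hr0 hf hfr)
          (memLp_of_integrable_rpow (div_pos hr0 hr1) hg hgr)) hr0.le
    _ = (∫ x, f x ^ r ∂μ) * (∫ x, g x ^ (r / (r - 1)) ∂μ) ^ (r - 1) := by
        rw [mul_rpow (by positivity) (by positivity), ← rpow_mul hF, ← rpow_mul hG,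
          one_div_mul_cancel hr0.ne', rpow_one, one_div_div, div_mul_cancel₀ _ hr0.ne']

theorem integral_mul_density_rpow_le (hr : r = 0 ∨ 1 ≤ r) (hf : 0 ≤ᵐ[μ] f) (hw : 0 ≤ᵐ[μ] w)
    (hw1 : ∫ x, w x ∂μ = 1) (hfr : Integrable (fun x => f x ^ r * w x) μ) :
    (∫ x, f x * w x ∂μ) ^ r ≤ ∫ x, f x ^ r * w x ∂μ := by
  rcases hr with rfl | hr
  · simp [hw1]
  rcases hr.eq_or_lt with rfl | hr
  · simp
  have hr0 : 0 < r := by linarith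
  have hr1 : 0 < r - 1 := by linarith
  have hwi : Integrable w μ := .of_integral_ne_zero (by simp [hw1])
  have hfw_rpow : (fun x => (f x * w x ^ (1 / r)) ^ r) =ᵐ[μ] fun x => f x ^ r * w x := by
    filter_upwards [hf, hw] with x hfx (hwx : 0 ≤ w x)
    rw [mul_rpow hfx (by positivity), ← rpow_mul hwx, one_div_mul_cancel hr0.ne', rpow_one]
  have hw_rpow : (fun x => (w x ^ ((r - 1) / r)) ^ (r / (r - 1))) =ᵐ[μ] w := by
    filter_upwards [hw] with x hwx
    rw [← rpow_mul hwx, div_mul_div_cancel₀ hr0.ne', div_self hr1.ne', rpow_one]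
  have hw_split : (fun x => f x * w x ^ (1 / r) * w x ^ ((r - 1) / r)) =ᵐ[μ]
      fun x => f x * w x := by
    filter_upwards [hw] with x hwx
    rw [mul_assoc, ← rpow_add_of_nonneg hwx (by positivity) (by positivity), ← add_div,
      add_sub_cancel, div_self hr0.ne', rpow_one]
  have holder := integral_mul_rpow_le_integral_rpow_mul (μ := μ) hr
    (f := fun x => f x * w x ^ (1 / r)) (g := fun x => w x ^ ((r - 1) / r))
    (by filter_upwards [hf, hw] with x hfx hwx using mul_nonneg hfx (rpow_nonneg hwx _))
    (by filter_upwards [hw] with x hwx using rpow_nonneg hwx _)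
    (hfr.congr hfw_rpow.symm) (hwi.congr hw_rpow.symm)
  rwa [integral_congr_ae hfw_rpow, integral_congr_ae hw_rpow, integral_congr_ae hw_split, hw1,
    one_rpow, mul_one] at holder

end Integral

section Young

/-- The constant in the inequality `ε x ^ q ≤ x ^ N + youngConst q N * ε ^ (N / (N - q))`, as in
the paper. The inequality is not sharp: the optimal constant has `q / N` in place of `N / q`. -/
noncomputable def youngConst (q N : ℝ) : ℝ := (N - q) / N * (N / q) ^ (q / (N - q))

variable {q N ε x K : ℝ}

theorem youngConst_pos (hq : 0 < q) (hN : q < N) : 0 < youngConst q N := by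
  have hN0 : 0 < N := hq.trans hN
  have hNq : 0 < N - q := sub_pos.2 hN
  unfold youngConst
  positivity

theorem mul_rpow_le_rpow_add_youngConst (hq : 0 < q) (hN : q < N) (hx : 0 ≤ x) (hε : 0 ≤ ε) :
    ε * x ^ q ≤ x ^ N + youngConst q N * ε ^ (N / (N - q)) := by
  have hN0 : 0 < N := hq.trans hN
  have hNq : 0 < N - q := sub_pos.2 hN
  have hNq1 : 1 < N / q := (one_lt_div hq).2 hN
  have hconj : (N / q).HolderConjugate (N / (N - q)) := by
    rw [holderConjugate_iff]
    refine ⟨hNq1, ?_⟩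
    field_simp
    ring
  calc ε * x ^ q = x ^ q * ε := mul_comm _ _
    _ ≤ (x ^ q) ^ (N / q) / (N / q) + ε ^ (N / (N - q)) / (N / (N - q)) :=
        young_inequality_of_nonneg (rpow_nonneg hx q) hε hconj
    _ = x ^ N / (N / q) + (N - q) / N * 1 * ε ^ (N / (N - q)) := by
        rw [← rpow_mul hx, mul_div_cancel₀ _ hq.ne']
        field_simp
    _ ≤ x ^ N + youngConst q N * ε ^ (N / (N - q)) := by
        unfold youngConst
        gcongr
        · exact div_le_self (by positivity) hNq1.le
        · exact one_le_rpow hNq1.le (by positivity)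

theorem sub_youngConst_mul_rpow_le_rpow (hq : 0 < q) (hN : q < N) (hK : 0 < K) (hKx : K ≤ x)
    (hε : 0 ≤ ε) :
    (ε - youngConst q N * ε ^ (N / (N - q)) / K ^ q) * x ^ q ≤ x ^ N := by
  have hA := youngConst_pos hq hN
  have hratio : 1 ≤ x ^ q / K ^ q :=
    (one_le_div (by positivity)).2 (rpow_le_rpow hK.le hKx hq.le)
  calc (ε - youngConst q N * ε ^ (N / (N - q)) / K ^ q) * x ^ q
      = ε * x ^ q - youngConst q N * ε ^ (N / (N - q)) * (x ^ q / K ^ q) := by ring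
    _ ≤ ε * x ^ q - youngConst q N * ε ^ (N / (N - q)) * 1 := by gcongr
    _ ≤ x ^ N := by linarith [mul_rpow_le_rpow_add_youngConst hq hN (hK.le.trans hKx) hε]

theorem sub_mul_rpow_div_nonneg {A : ℝ} (hq : 0 < q) (hN : q < N) (hA : 0 < A) (hε : 0 < ε)
    (hK : 0 < K) (h : ε ≤ (K / A) ^ ((N - q) / q)) : 0 ≤ ε - A * ε ^ (N / (N - q)) / K := by
  have hNq : 0 < N - q := sub_pos.2 hN
  have hpow : ε ^ (q / (N - q)) ≤ K / A := by
    rwa [← le_rpow_inv_iff_of_pos hε.le (by positivity) (by positivity), inv_div]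
  have hsplit : ε ^ (N / (N - q)) = ε * ε ^ (q / (N - q)) := by
    rw [← rpow_one_add' hε.le (by positivity), one_add_div hNq.ne', sub_add_cancel]
  rw [le_div_iff₀' hA] at hpow
  rw [sub_nonneg, div_le_iff₀ hK, hsplit, mul_left_comm]
  gcongr

end Young

section Bernoulli

variable {J J' M : ℝ → ℝ} {a q : ℝ}

theorem hasDerivWithinAt_rpow_one_sub_mul_exp {s : ℝ} {S : Set ℝ} {j' : ℝ} (hJ : 0 < J s)
    (hJ' : HasDerivWithinAt J j' S s) :
    HasDerivWithinAt (fun τ => J τ ^ (1 - q) * exp (a * (q - 1) * τ))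
      (-((q - 1) * J s ^ (-q) * exp (a * (q - 1) * s) * (j' - a * J s))) S s := by
  have hpow := hJ'.rpow_const (p := 1 - q) (Or.inl hJ.ne')
  have hexp : HasDerivWithinAt (fun τ => exp (a * (q - 1) * τ))
      (exp (a * (q - 1) * s) * (a * (q - 1))) S s := by
    simpa using ((hasDerivWithinAt_id s S).const_mul (a * (q - 1))).exp
  have hsplit : J s ^ (1 - q) = J s ^ (-q) * J s := by
    rw [← rpow_add_one hJ.ne', neg_add_eq_sub]
  rw [sub_sub_cancel_left] at hpow
  refine (hpow.mul hexp).congr_deriv ?_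
  rw [hsplit]
  ring

theorem integral_lt_of_bernoulli_deriv_ge {t : ℝ} (ht : 0 ≤ t) (hq : 1 ≤ q)
    (hJ : ∀ s ∈ Icc 0 t, 0 < J s) (hJc : ContinuousOn J (Icc 0 t))
    (hJ' : ∀ s ∈ Ioo 0 t, HasDerivWithinAt J (J' s) (Ioi s) s)
    (hM : IntegrableOn M (Icc 0 t)) (hle : ∀ s ∈ Ioo 0 t, a * J s + M s * J s ^ q ≤ J' s) :
    (q - 1) * (∫ s in (0 : ℝ)..t, M s * exp (a * (q - 1) * s)) < J 0 ^ (1 - q) := by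
  have hcont : ContinuousOn (fun s => J s ^ (1 - q) * exp (a * (q - 1) * s)) (Icc 0 t) :=
    (hJc.rpow_const fun s hs => Or.inl (hJ s hs).ne').mul (by fun_prop)
  have hint : IntegrableOn (fun s => -(q - 1) * (M s * exp (a * (q - 1) * s))) (Icc 0 t) :=
    (hM.mul_continuousOn (by fun_prop) isCompact_Icc).const_mul _
  have hslope : ∀ s ∈ Ioo 0 t,
      -((q - 1) * J s ^ (-q) * exp (a * (q - 1) * s) * (J' s - a * J s))
        ≤ -(q - 1) * (M s * exp (a * (q - 1) * s)) := by
    intro s hs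
    have hJs := hJ s (Ioo_subset_Icc_self hs)
    have hM_le : M s ≤ J s ^ (-q) * (J' s - a * J s) := by
      rw [rpow_neg hJs.le, le_inv_mul_iff₀ (by positivity)]
      linarith [hle s hs]
    have hw : 0 ≤ (q - 1) * exp (a * (q - 1) * s) := mul_nonneg (by linarith) (exp_pos _).le
    linarith [mul_le_mul_of_nonneg_left hM_le hw]
  have hdiff := intervalIntegral.sub_le_integral_of_hasDeriv_right_of_le ht hcont
    (fun s hs => hasDerivWithinAt_rpow_one_sub_mul_exp (hJ s (Ioo_subset_Icc_self hs)) (hJ' s hs))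
    hint hslope
  have hpos : 0 < J t ^ (1 - q) * exp (a * (q - 1) * t) :=
    mul_pos (rpow_pos_of_pos (hJ t ⟨ht, le_rfl⟩) _) (exp_pos _)
  rw [intervalIntegral.integral_const_mul, mul_zero, exp_zero, mul_one] at hdiff
  linarith

end Bernoulli

section Reaction

theorem half_mul_rpow_le_sub {s κ P X Y : ℝ} (hs : 0 ≤ s) (hP : 0 < P) (hX : 0 ≤ X)
    (hXY : X ^ (1 + s) ≤ Y * P ^ s) (hκ : 2 * κ * P ^ s ≤ X ^ s) :
    1 / 2 * P ^ (-s) * X ^ (1 + s) ≤ Y - κ * X := by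
  have hPs : 0 < P ^ s := rpow_pos_of_pos hP s
  have habsorb : 2 * κ * X * P ^ s ≤ X ^ (1 + s) :=
    calc 2 * κ * X * P ^ s = X * (2 * κ * P ^ s) := by ring
      _ ≤ X * X ^ s := by gcongr
      _ = X ^ (1 + s) := (rpow_one_add' hX (by positivity)).symm
  have hloss : 2 * κ * X ≤ P ^ (-s) * X ^ (1 + s) := by
    rwa [rpow_neg hP.le, le_inv_mul_iff₀' hPs]
  have hgain : P ^ (-s) * X ^ (1 + s) ≤ Y := by
    rwa [rpow_neg hP.le, inv_mul_le_iff₀' hPs]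
  linarith

theorem min_mul_add_le {e₁ e₂ x y X Y : ℝ} (he₁ : 0 ≤ e₁) (he₂ : 0 ≤ e₂) (hx : 0 ≤ x) (hy : 0 ≤ y)
    (hxX : x ≤ X) (hyY : y ≤ Y) : min e₁ e₂ * (x + y) ≤ e₁ * X + e₂ * Y := by
  rw [mul_add]
  exact add_le_add (mul_le_mul (min_le_left _ _) hxX hx he₁)
    (mul_le_mul (min_le_right _ _) hyY hy he₂)

variable {α : Type*} [MeasurableSpace α] {μ : Measure α} {φ u : α → ℝ} {b p q m n : ℝ}

theorem ae_nonneg_of_mul_le (hb : 0 ≤ b) (hφ : 0 ≤ᵐ[μ] φ) (hu : ∀ᵐ x ∂μ, b * φ x ≤ u x) :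
    0 ≤ᵐ[μ] u := by
  filter_upwards [hφ, hu] with x hφx hux using (mul_nonneg hb hφx).trans hux

theorem rpow_mul_integral_rpow_add_one_le (hb : 0 ≤ b) (hp : 0 ≤ p) (hφ : 0 ≤ᵐ[μ] φ)
    (hu : ∀ᵐ x ∂μ, b * φ x ≤ u x) (hφp : Integrable (fun x => φ x ^ (p + 1)) μ)
    (hup : Integrable (fun x => u x ^ p * φ x) μ) :
    b ^ p * ∫ x, φ x ^ (p + 1) ∂μ ≤ ∫ x, u x ^ p * φ x ∂μ := by
  rw [← integral_const_mul]
  refine integral_mono_ae (hφp.const_mul _) hup ?_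
  filter_upwards [hφ, hu] with x (hφx : 0 ≤ φ x) hux
  calc b ^ p * φ x ^ (p + 1) = (b * φ x) ^ p * φ x := by
        rw [mul_rpow hb hφx, rpow_add_one' hφx (by positivity), mul_assoc]
    _ ≤ u x ^ p * φ x := by gcongr

theorem integral_rpow_mul_rpow_div_le (hp : 0 < p) (hpq : p < q) (hφ : 0 ≤ᵐ[μ] φ)
    (hu : 0 ≤ᵐ[μ] u) (hφq : Integrable (fun x => φ x ^ (q / (q - p))) μ)
    (huq : Integrable (fun x => u x ^ q) μ) :
    (∫ x, u x ^ p * φ x ∂μ) ^ (q / p)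
      ≤ (∫ x, u x ^ q ∂μ) * (∫ x, φ x ^ (q / (q - p)) ∂μ) ^ ((q - p) / p) := by
  have hconj : q / p / (q / p - 1) = q / (q - p) := by
    rw [div_sub_one hp.ne', div_div_div_cancel_right₀ hp.ne']
  have hpow : (fun x => (u x ^ p) ^ (q / p)) =ᵐ[μ] fun x => u x ^ q := by
    filter_upwards [hu] with x hux
    rw [← rpow_mul hux, mul_div_cancel₀ _ hp.ne']
  have holder := integral_mul_rpow_le_integral_rpow_mul (f := fun x => u x ^ p) (g := φ)
    ((one_lt_div hp).2 hpq) (by filter_upwards [hu] with x hux using rpow_nonneg hux p) hφ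
    (huq.congr hpow.symm) (by rwa [hconj])
  rwa [hconj, integral_congr_ae hpow, div_sub_one hp.ne'] at holder

theorem half_mul_integral_rpow_le_sub (hb : 0 < b) (hp : 1 ≤ p) (hpq : p < q) {κ : ℝ}
    (hφ : 0 ≤ᵐ[μ] φ) (hφ1 : ∫ x, φ x ∂μ = 1)
    (hφq : Integrable (fun x => φ x ^ (q / (q - p))) μ)
    (hφp : Integrable (fun x => φ x ^ (p + 1)) μ)
    (hu : ∀ᵐ x ∂μ, b * φ x ≤ u x)
    (huq : Integrable (fun x => u x ^ q) μ) (hup : Integrable (fun x => u x ^ p * φ x) μ)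
    (hκ : 2 * κ * (∫ x, φ x ^ (q / (q - p)) ∂μ) ^ ((q - p) / p)
        / (∫ x, φ x ^ (p + 1) ∂μ) ^ ((q - p) / p) ≤ b ^ (q - p)) :
    1 / 2 * (∫ x, φ x ^ (q / (q - p)) ∂μ) ^ ((p - q) / p) * (∫ x, u x * φ x ∂μ) ^ q
      ≤ ∫ x, u x ^ q ∂μ - κ * ∫ x, u x ^ p * φ x ∂μ := by
  have hp0 : 0 < p := by linarith
  have hu0 := ae_nonneg_of_mul_le hb.le hφ hu
  have hs : 0 < (q - p) / p := div_pos (by linarith) hp0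
  have hφ0 : ¬ φ =ᵐ[μ] 0 := fun h => by simp [integral_congr_ae h] at hφ1
  have hP := integral_rpow_pos (div_pos (by linarith) (by linarith)).ne' hφ hφ0 hφq
  have hR := integral_rpow_pos (by linarith) hφ hφ0 hφp
  have hX := rpow_mul_integral_rpow_add_one_le hb.le hp0.le hφ hu hφp hup
  have hJ : 0 ≤ ∫ x, u x * φ x ∂μ := integral_nonneg_of_ae <| by
    filter_upwards [hu0, hφ] with x hux hφx using mul_nonneg hux hφx
  have hsmall : 2 * κ * (∫ x, φ x ^ (q / (q - p)) ∂μ) ^ ((q - p) / p)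
      ≤ (∫ x, u x ^ p * φ x ∂μ) ^ ((q - p) / p) :=
    calc _ ≤ b ^ (q - p) * (∫ x, φ x ^ (p + 1) ∂μ) ^ ((q - p) / p) :=
          (div_le_iff₀ (by positivity)).1 hκ
      _ = (b ^ p * ∫ x, φ x ^ (p + 1) ∂μ) ^ ((q - p) / p) := by
          rw [mul_rpow (by positivity) hR.le, ← rpow_mul hb.le, mul_div_cancel₀ _ hp0.ne']
      _ ≤ _ := rpow_le_rpow (by positivity) hX hs.le
  have hexponent : 1 + (q - p) / p = q / p := by rw [one_add_div hp0.ne', add_sub_cancel]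
  calc _ = 1 / 2 * (∫ x, φ x ^ (q / (q - p)) ∂μ) ^ (-((q - p) / p))
          * ((∫ x, u x * φ x ∂μ) ^ p) ^ (1 + (q - p) / p) := by
        rw [hexponent, ← rpow_mul hJ, mul_div_cancel₀ _ hp0.ne', ← neg_div, neg_sub]
    _ ≤ 1 / 2 * (∫ x, φ x ^ (q / (q - p)) ∂μ) ^ (-((q - p) / p))
          * (∫ x, u x ^ p * φ x ∂μ) ^ (1 + (q - p) / p) := by
        gcongr
        exact integral_mul_density_rpow_le (Or.inr hp) hu0 hφ hφ1 hup
    _ ≤ _ := by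
        refine half_mul_rpow_le_sub hs.le hP (hX.trans' (by positivity)) ?_ hsmall
        rw [hexponent]
        exact integral_rpow_mul_rpow_div_le hp0 hpq hφ hu0 hφq huq

theorem integral_mul_rpow_add_mul_le (hn : 1 < n) (hm : m = 0 ∨ 1 ≤ m) (hφ : 0 ≤ᵐ[μ] φ)
    (hφ1 : ∫ x, φ x ∂μ = 1) (hφn : Integrable (fun x => φ x ^ (n / (n - 1))) μ)
    (hu : 0 ≤ᵐ[μ] u) (hun : Integrable (fun x => u x ^ n) μ)
    (hum : Integrable (fun x => u x ^ m * φ x) μ) (hJ : 0 < ∫ x, u x * φ x ∂μ) :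
    (∫ x, u x * φ x ∂μ) ^ (m + n) * (∫ x, φ x ^ (n / (n - 1)) ∂μ) ^ (1 - n)
      ≤ (∫ x, u x ^ m * φ x ∂μ) * ∫ x, u x ^ n ∂μ := by
  have hφ0 : ¬ φ =ᵐ[μ] 0 := fun h => by simp [integral_congr_ae h] at hφ1
  have hQ := integral_rpow_pos (div_pos (by linarith) (by linarith)).ne' hφ hφ0 hφn
  have jensen := integral_mul_density_rpow_le hm hu hφ hφ1 hum
  have holder : (∫ x, u x * φ x ∂μ) ^ n * (∫ x, φ x ^ (n / (n - 1)) ∂μ) ^ (1 - n)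
      ≤ ∫ x, u x ^ n ∂μ := by
    rw [← neg_sub n 1, rpow_neg hQ.le, mul_inv_le_iff₀ (by positivity)]
    exact integral_mul_rpow_le_integral_rpow_mul hn hu hφ hun hφn
  rw [rpow_add hJ, mul_assoc]
  exact mul_le_mul jensen holder (by positivity) ((rpow_nonneg hJ.le m).trans jensen)

theorem integral_mul_pos_of_mul_le (hb : 0 < b) (hφ : 0 ≤ᵐ[μ] φ) (hφ0 : ¬ φ =ᵐ[μ] 0)
    (hu : ∀ᵐ x ∂μ, b * φ x ≤ u x) (huφ : Integrable (fun x => u x * φ x) μ) :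
    0 < ∫ x, u x * φ x ∂μ := by
  refine integral_pos_of_ae_eq_zero_imp ?_ huφ hφ0 ?_
  · filter_upwards [ae_nonneg_of_mul_le hb.le hφ hu, hφ] with x hux hφx using mul_nonneg hux hφx
  · filter_upwards [hφ, hu] with x hφx hux hzero
    rcases mul_eq_zero.1 hzero with hux0 | hφx0
    · exact le_antisymm (nonpos_of_mul_nonpos_right (hux.trans_eq hux0) hb) hφx
    · exact hφx0

theorem mul_min_mul_integral_rpow_le_reaction {δ k c e₁ e₂ e₃ : ℝ} (hδ : 0 ≤ δ) (hb : 0 < b)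
    (hp : 1 ≤ p) (hpq : p < q) (hn : 1 < n) (hm : m = 0 ∨ 1 ≤ m) (he₁ : 0 < e₁) (he₃ : 0 ≤ e₃)
    (hφ : 0 ≤ᵐ[μ] φ) (hφ1 : ∫ x, φ x ∂μ = 1)
    (hφq : Integrable (fun x => φ x ^ (q / (q - p))) μ)
    (hφn : Integrable (fun x => φ x ^ (n / (n - 1))) μ)
    (hφp : Integrable (fun x => φ x ^ (p + 1)) μ)
    (hu : ∀ᵐ x ∂μ, b * φ x ≤ u x)
    (huq : Integrable (fun x => u x ^ q) μ) (hun : Integrable (fun x => u x ^ n) μ)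
    (hup : Integrable (fun x => u x ^ p * φ x) μ) (hum : Integrable (fun x => u x ^ m * φ x) μ)
    (hJ : 0 < ∫ x, u x * φ x ∂μ)
    (hk : 2 * k * (∫ x, φ x ^ (q / (q - p)) ∂μ) ^ ((q - p) / p)
        / (∫ x, φ x ^ (p + 1) ∂μ) ^ ((q - p) / p) * e₂ ≤ b ^ (q - p) * e₁)
    (hc : 0 ≤ c) (hcJ : c * (∫ x, u x * φ x ∂μ) ^ q ≤ (∫ x, u x * φ x ∂μ) ^ (m + n)) :
    (1 / 2 * (∫ x, φ x ^ (q / (q - p)) ∂μ) ^ ((p - q) / p)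
        + δ * c * (∫ x, φ x ^ (n / (n - 1)) ∂μ) ^ (1 - n))
        * min e₁ e₃ * (∫ x, u x * φ x ∂μ) ^ q
      ≤ e₁ * (∫ x, u x ^ q ∂μ) - k * e₂ * (∫ x, u x ^ p * φ x ∂μ)
        + δ * e₃ * (∫ x, u x ^ m * φ x ∂μ) * (∫ x, u x ^ n ∂μ) := by
  have hP : 0 ≤ ∫ x, φ x ^ (q / (q - p)) ∂μ := integral_nonneg_of_ae <| by
    filter_upwards [hφ] with x hφx using rpow_nonneg hφx _
  have hQ : 0 ≤ ∫ x, φ x ^ (n / (n - 1)) ∂μ := integral_nonneg_of_ae <| by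
    filter_upwards [hφ] with x hφx using rpow_nonneg hφx _
  have hκ : 2 * (k * e₂ / e₁) * (∫ x, φ x ^ (q / (q - p)) ∂μ) ^ ((q - p) / p)
      / (∫ x, φ x ^ (p + 1) ∂μ) ^ ((q - p) / p) ≤ b ^ (q - p) :=
    ((div_le_iff₀ he₁).2 hk).trans_eq' (by ring)
  have hlocal := half_mul_integral_rpow_le_sub hb hp hpq hφ hφ1 hφq hφp hu huq hup hκ
  have hnonlocal : δ * (c * (∫ x, u x * φ x ∂μ) ^ q * (∫ x, φ x ^ (n / (n - 1)) ∂μ) ^ (1 - n))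
      ≤ δ * ((∫ x, u x ^ m * φ x ∂μ) * ∫ x, u x ^ n ∂μ) := by
    refine mul_le_mul_of_nonneg_left (le_trans ?_
      (integral_mul_rpow_add_mul_le hn hm hφ hφ1 hφn
        (ae_nonneg_of_mul_le hb.le hφ hu) hun hum hJ)) hδ
    gcongr
  have hsum := min_mul_add_le he₁.le he₃ (by positivity) (by positivity) hlocal hnonlocal
  rw [mul_sub, ← mul_assoc e₁, mul_div_cancel₀ _ he₁.ne'] at hsum
  linarith

end Reaction

theorem abs_le_iSup_abs_of_continuousOn {X : Type*} [TopologicalSpace X] {K : Set X} {f : X → ℝ}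
    (hK : IsCompact K) (hf : ContinuousOn f K) {x : X} (hx : x ∈ K) : |f x| ≤ ⨆ y : K, |f y| :=
  le_ciSup_set (f := fun y => |f y|) (hK.bddAbove_image hf.abs) hx

theorem exp_neg_mul_exp_le_exp {η p q S B : ℝ} (hη : 0 ≤ η) (hp : 1 ≤ p) (hpq : p ≤ q)
    (hB : |B| ≤ S) :
    exp (-(η * (q - 1) * S)) * exp ((p - 1) * η * B) ≤ exp ((q - 1) * η * B) := by
  have hqp : 0 ≤ q - p := sub_nonneg.2 hpq
  have hq1 : 0 ≤ q - 1 := by linarith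
  have hS : -(η * (q - 1) * S) ≤ (q - p) * η * B :=
    calc -(η * (q - 1) * S) ≤ -(η * (q - p) * |B|) := by gcongr
      _ = (q - p) * η * -|B| := by ring
      _ ≤ (q - p) * η * B := by
        gcongr
        exact neg_abs_le B
  rw [← exp_add, exp_le_exp]
  linarith

theorem mul_exp_le_mul_exp_of_le_mul_exp_neg_iSup {X : Type*} [TopologicalSpace X] {K : Set X}
    {f : X → ℝ} {η p q A B : ℝ} (hη : 0 ≤ η) (hp : 1 ≤ p) (hpq : p ≤ q) (hK : IsCompact K)
    (hf : ContinuousOn f K) (hB : 0 ≤ B)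
    (hAB : A ≤ B * exp (-(η * (q - 1) * ⨆ y : K, |f y|))) {x : X} (hx : x ∈ K) :
    A * exp ((p - 1) * η * f x) ≤ B * exp ((q - 1) * η * f x) :=
  calc A * exp ((p - 1) * η * f x)
      ≤ B * exp (-(η * (q - 1) * ⨆ y : K, |f y|)) * exp ((p - 1) * η * f x) := by gcongr
    _ = B * (exp (-(η * (q - 1) * ⨆ y : K, |f y|)) * exp ((p - 1) * η * f x)) := mul_assoc _ _ _
    _ ≤ B * exp ((q - 1) * η * f x) := by
        gcongr
        exact exp_neg_mul_exp_le_exp hη hp hpq (abs_le_iSup_abs_of_continuousOn hK hf hx)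

theorem statement12_general {α : Type*} [MeasurableSpace α] {μ : Measure α} {T : ℝ}
    {a k δ η p q n m b : ℝ} (hδ : 0 ≤ δ) (hη : 0 ≤ η) (hn : 1 < n) (hm : m = 0 ∨ 1 ≤ m)
    (hp : 1 ≤ p) (hpq : p < q) (hqmn : q < m + n)
    {φ : α → ℝ} (hφ : 0 ≤ᵐ[μ] φ) (hφ_int : ∫ x, φ x ∂μ = 1)
    (hφq : Integrable (fun x => φ x ^ (q / (q - p))) μ)
    (hφn : Integrable (fun x => φ x ^ (n / (n - 1))) μ)
    (hφp : Integrable (fun x => φ x ^ (p + 1)) μ)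
    {β : ℝ → ℝ} (hβ : ContinuousOn β (Icc 0 T)) (hb : 0 < b)
    (hcond : 2 * k * (∫ x, φ x ^ (q / (q - p)) ∂μ) ^ ((q - p) / p)
        / (∫ x, φ x ^ (p + 1) ∂μ) ^ ((q - p) / p)
      ≤ b ^ (q - p) * exp (-(η * (q - 1) * (⨆ s : Icc (0 : ℝ) T, |β (s : ℝ)|))))
    {v : ℝ → α → ℝ} (hv_lb : ∀ t ∈ Icc 0 T, ∀ᵐ x ∂μ, b * φ x ≤ v t x)
    (hvq : ∀ t ∈ Icc 0 T, Integrable (fun x => v t x ^ q) μ)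
    (hvn : ∀ t ∈ Icc 0 T, Integrable (fun x => v t x ^ n) μ)
    (hvp : ∀ t ∈ Icc 0 T, Integrable (fun x => v t x ^ p * φ x) μ)
    (hvm : ∀ t ∈ Icc 0 T, Integrable (fun x => v t x ^ m * φ x) μ)
    (hv1 : ∀ t ∈ Icc 0 T, Integrable (fun x => v t x * φ x) μ)
    {J J' : ℝ → ℝ} (hJ : ∀ t ∈ Icc 0 T, J t = ∫ x, v t x * φ x ∂μ)
    (hJmono : ∀ t ∈ Icc 0 T, J 0 ≤ J t)
    (hJ' : ∀ t ∈ Icc 0 T, HasDerivWithinAt J (J' t) (Icc 0 T) t)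
    (hJ'_ge : ∀ t ∈ Icc 0 T,
      a * J t + exp ((q - 1) * η * β t) * (∫ x, v t x ^ q ∂μ)
        - k * exp ((p - 1) * η * β t) * (∫ x, v t x ^ p * φ x ∂μ)
        + δ * exp ((m + n - 1) * η * β t) * (∫ x, v t x ^ m * φ x ∂μ) * (∫ x, v t x ^ n ∂μ)
      ≤ J' t)
    {A₀ : ℝ} (hA₀ : A₀ = youngConst q (m + n))
    {ε₀ : ℝ} (hε₀pos : 0 < ε₀) (hε₀ : ε₀ ≤ (J 0 ^ q / A₀) ^ ((m + n - q) / q))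
    {C : ℝ}
    (hC : C = 1 / 2 * (∫ x, φ x ^ (q / (q - p)) ∂μ) ^ ((p - q) / p)
      + δ * (ε₀ - A₀ * ε₀ ^ ((m + n) / (m + n - q)) / J 0 ^ q)
          * (∫ x, φ x ^ (n / (n - 1)) ∂μ) ^ (1 - n)) :
    ∀ t ∈ Icc 0 T,
      (q - 1) * C * (∫ s in (0 : ℝ)..t,
          min (exp ((q - 1) * η * β s)) (exp ((m + n - 1) * η * β s)) * exp (a * (q - 1) * s))
        < J 0 ^ (1 - q) := by
  intro t ht
  have hq : 0 < q := by linarith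
  have hsub : Icc 0 t ⊆ Icc 0 T := Icc_subset_Icc_right ht.2
  have hβt : ContinuousOn β (Icc 0 t) := hβ.mono hsub
  have hφ0 : ¬ φ =ᵐ[μ] 0 := fun h => by simp [integral_congr_ae h] at hφ_int
  have hJpos : ∀ s ∈ Icc 0 T, 0 < J s := fun s hs => by
    rw [hJ s hs]
    exact integral_mul_pos_of_mul_le hb hφ hφ0 (hv_lb s hs) (hv1 s hs)
  have hJ0 : 0 < J 0 := hJpos 0 ⟨le_rfl, ht.1.trans ht.2⟩
  have hcoeff : 0 ≤ ε₀ - A₀ * ε₀ ^ ((m + n) / (m + n - q)) / J 0 ^ q :=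
    sub_mul_rpow_div_nonneg hq hqmn (hA₀ ▸ youngConst_pos hq hqmn) hε₀pos
      (rpow_pos_of_pos hJ0 q) hε₀
  have hbernoulli : ∀ s ∈ Icc 0 T, a * J s
      + C * min (exp ((q - 1) * η * β s)) (exp ((m + n - 1) * η * β s)) * J s ^ q ≤ J' s := by
    intro s hs
    have hk := mul_exp_le_mul_exp_of_le_mul_exp_neg_iSup hη hp hpq.le isCompact_Icc hβ
      (rpow_nonneg hb.le (q - p)) hcond hs
    have hyoung := sub_youngConst_mul_rpow_le_rpow hq hqmn hJ0 (hJmono s hs) hε₀pos.le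
    rw [← hA₀, hJ s hs] at hyoung
    have hreaction := mul_min_mul_integral_rpow_le_reaction hδ hb hp hpq hn hm (exp_pos _)
      (exp_pos ((m + n - 1) * η * β s)).le hφ hφ_int hφq hφn hφp (hv_lb s hs) (hvq s hs) (hvn s hs)
      (hvp s hs) (hvm s hs) (hJ s hs ▸ hJpos s hs) hk hcoeff hyoung
    rw [← hC, ← hJ s hs] at hreaction
    linarith [hJ'_ge s hs]
  have hmain := integral_lt_of_bernoulli_deriv_ge ht.1 (by linarith : 1 ≤ q)
    (fun s hs => hJpos s (hsub hs)) (fun s hs => (hJ' s (hsub hs)).continuousWithinAt.mono hsub)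
    (fun s hs => (hJ' s (hsub (Ioo_subset_Icc_self hs))).mono_of_mem_nhdsWithin
      (mem_nhdsWithin_of_mem_nhds (Icc_mem_nhds hs.1 (hs.2.trans_le ht.2))))
    (ContinuousOn.integrableOn_Icc (by fun_prop))
    (fun s hs => hbernoulli s (hsub (Ioo_subset_Icc_self hs)))
  simpa only [mul_assoc, intervalIntegral.integral_const_mul] using hmain

/-- Pathwise upper bound for the blow-up time in the case `m + n > q`
(Theorem 5.1, case 2): on any interval `[0,T]` on which the solution exists,
`(q−1)·C·∫₀^t min(e^{(q−1)ηβ(s)}, e^{(m+n−1)ηβ(s)})·e^{(−λ₁+γ)(q−1)s} ds < J(0)^{1−q}`. -/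
theorem statement12 {d : ℕ} (D : Set (EuclideanSpace ℝ (Fin d)))
    (hDmeas : MeasurableSet D) (hD0 : 0 < volume D) (hDfin : volume D < ⊤)
    (T : ℝ) (hT : 0 < T)
    (k δ η γ lam1 : ℝ) (hk : 0 < k) (hδ : 0 ≤ δ) (hη : 0 ≤ η) (hlam : 0 < lam1)
    (p q n m : ℝ) (hn : 1 < n) (hm : m = 0 ∨ 1 ≤ m)
    (hp : 1 < p) (hpq : p < q) (hqmn : q < m + n)
    (φ : EuclideanSpace ℝ (Fin d) → ℝ) (hφmeas : Measurable φ)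
    (hφnn : ∀ x ∈ D, 0 ≤ φ x)
    (hφ_int : (∫ y in D, φ y) = 1)
    (hφ1 : IntegrableOn (fun y => φ y ^ (q / (q - p))) D)
    (hφ2 : IntegrableOn (fun y => φ y ^ (n / (n - 1))) D)
    (hφ3 : IntegrableOn (fun y => φ y ^ (p + 1)) D)
    (β : ℝ → ℝ) (hβ : ContinuousOn β (Icc 0 T))
    (b : ℝ) (hb : 1 < b)
    -- the third condition of (B1), with `β*(T) = sup_{0≤s≤T}|β(s)|`
    (hcond : 2 * k * (∫ y in D, φ y ^ (q / (q - p))) ^ ((q - p) / p)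
        / (∫ y in D, φ y ^ (p + 1)) ^ ((q - p) / p)
      ≤ b ^ (q - p) * exp (-(η * (q - 1) * (⨆ s : Icc (0:ℝ) T, |β (s : ℝ)|))))
    (v : ℝ → EuclideanSpace ℝ (Fin d) → ℝ)
    (hv_nn : ∀ t ∈ Icc 0 T, ∀ x ∈ D, 0 ≤ v t x)
    (hv_lb : ∀ t ∈ Icc 0 T, ∀ x ∈ D, b * φ x ≤ v t x)
    (hv1 : ∀ t ∈ Icc 0 T, IntegrableOn (fun y => v t y ^ q) D)
    (hv2 : ∀ t ∈ Icc 0 T, IntegrableOn (fun y => v t y ^ n) D)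
    (hv3 : ∀ t ∈ Icc 0 T, IntegrableOn (fun x => v t x ^ p * φ x) D)
    (hv4 : ∀ t ∈ Icc 0 T, IntegrableOn (fun x => v t x ^ m * φ x) D)
    (hv5 : ∀ t ∈ Icc 0 T, IntegrableOn (fun x => v t x * φ x) D)
    (J : ℝ → ℝ) (hJ : ∀ t ∈ Icc 0 T, J t = ∫ x in D, v t x * φ x)
    (hJmono : ∀ t ∈ Icc 0 T, J 0 ≤ J t)
    -- `J` is differentiable, with derivative given by the identity obtained from
    -- the transformed PDE via `−Δφ = λ₁φ`, `∫_D φ = 1` and integration by parts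
    (hJ' : ∀ t ∈ Icc 0 T, HasDerivAt J
      ((-lam1 + γ) * J t
        + exp ((q - 1) * η * β t) * (∫ y in D, v t y ^ q)
        - k * exp ((p - 1) * η * β t) * (∫ x in D, v t x ^ p * φ x)
        + δ * exp ((m + n - 1) * η * β t) * (∫ z in D, v t z ^ m * φ z)
            * (∫ y in D, v t y ^ n)) t)
    (A₀ : ℝ)
    (hA₀ : A₀ = ((m + n - q) / (m + n)) * ((m + n) / q) ^ (q / (m + n - q)))
    (ε₀ : ℝ) (hε₀pos : 0 < ε₀) (hε₀ : ε₀ ≤ (J 0 ^ q / A₀) ^ ((m + n - q) / q))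
    (C : ℝ)
    (hC : C = (1 / 2) * (∫ x in D, φ x ^ (q / (q - p))) ^ ((p - q) / p)
      + δ * (ε₀ - A₀ * ε₀ ^ ((m + n) / (m + n - q)) / J 0 ^ q)
          * (∫ x in D, φ x ^ (n / (n - 1))) ^ (1 - n)) :
    ∀ t ∈ Icc 0 T,
      (q - 1) * C * (∫ s in (0:ℝ)..t,
          min (exp ((q - 1) * η * β s)) (exp ((m + n - 1) * η * β s))
            * exp ((-lam1 + γ) * (q - 1) * s))
        < J 0 ^ (1 - q) := by
  have hae {P : EuclideanSpace ℝ (Fin d) → Prop} (h : ∀ x ∈ D, P x) :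
      ∀ᵐ x ∂volume.restrict D, P x := ae_restrict_of_forall_mem hDmeas h
  exact statement12_general hδ hη hn hm hp.le hpq hqmn (hae hφnn) hφ_int hφ1 hφ2 hφ3 hβ
    (by linarith) hcond (fun t ht => hae (hv_lb t ht)) hv1 hv2 hv3 hv4 hv5 hJ hJmono
    (fun t ht => (hJ' t ht).hasDerivWithinAt) (fun t _ => le_rfl) hA₀ hε₀pos hε₀ hC
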